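/- Let P be a normal logic program over atoms a_1, …, a_n, let ⊗ be a t-norm and ⊕ a t-conorm, and let τ, φ, δ ∈ {0,1}^n be binary vectors. Let T = [τ], F = [φ], U the set induced by μ = (1−τ) ⊗ (1−φ) (componentwise), and φ' = φ + (μ ⊙ δ) (componentwise). Then: (i) [μ] = 𝒜 ∖ (T ∪ F); (ii) [φ'] = F ∪ (U ∩ [δ]); and (iii) if propagation computes the least fixpoint of 𝒞_{P,φ'} starting from τ, the induced true set equals C_{P,𝒜∖[φ']}^∞(T). Hence one binary NDProp update coincides with one (batch) DProp iteration. -/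

import Mathlib

instance : Fact ((0:ℝ) ≤ 1) := ⟨zero_le_one⟩

/-- A rule of a normal logic program: head atom, positive body atoms, default-negated body atoms. -/
structure Rule (α : Type) where
  head : α
  pos : Finset α
  neg : Finset α
deriving DecidableEq

/-- A t-norm on the unit interval: commutative, associative, monotone in each argument,
with unit `1`. -/
structure Tnorm where
  f : unitInterval → unitInterval → unitInterval
  comm : ∀ x y, f x y = f y x
  assoc : ∀ x y z, f (f x y) z = f x (f y z)
  mono : ∀ ⦃x x' y y'⦄, x ≤ x' → y ≤ y' → f x y ≤ f x' y'
  one_left : ∀ x, f 1 x = x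

/-- A t-conorm on the unit interval: commutative, associative, monotone in each argument,
with unit `0`. -/
structure Tconorm where
  f : unitInterval → unitInterval → unitInterval
  comm : ∀ x y, f x y = f y x
  assoc : ∀ x y z, f (f x y) z = f x (f y z)
  mono : ∀ ⦃x x' y y'⦄, x ≤ x' → y ≤ y' → f x y ≤ f x' y'
  zero_left : ∀ x, f 0 x = x

instance (t : Tnorm) : Std.Commutative t.f := ⟨t.comm⟩
instance (t : Tnorm) : Std.Associative t.f := ⟨t.assoc⟩
instance (s : Tconorm) : Std.Commutative s.f := ⟨s.comm⟩
instance (s : Tconorm) : Std.Associative s.f := ⟨s.assoc⟩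

/-- ⊗-product of `g` over a finite set (empty product = `1`). -/
def tnormProd {β : Type} (t : Tnorm) (g : β → unitInterval) (s : Finset β) : unitInterval :=
  s.fold t.f 1 g

/-- ⊕-sum of `g` over a finite set (empty sum = `0`). -/
def tconormSum {β : Type} (s : Tconorm) (g : β → unitInterval) (q : Finset β) : unitInterval :=
  q.fold s.f 0 g

/-- Support `ρ(τ,φ)` of a rule: the ⊗-product of the values of all its body literals,
where `val(a) = τ a` and `val(not a) = φ a`. -/
def support {α : Type} (t : Tnorm) (τ φ : α → unitInterval) (r : Rule α) : unitInterval :=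
  t.f (tnormProd t τ r.pos) (tnormProd t φ r.neg)

/-- The soft immediate consequence operator `𝒞_{P,φ}(τ)`: for each atom `a`, the ⊕-sum of
the supports of all rules with head `a`. -/
def softC {α : Type} [DecidableEq α] (t : Tnorm) (s : Tconorm) (P : Finset (Rule α))
    (φ τ : α → unitInterval) : α → unitInterval :=
  fun a => tconormSum s (support t τ φ) (P.filter fun r => r.head = a)

/-- The set induced by a degree vector: `[ψ] = { a | ψ a = 1 }`. -/
def induced {α : Type} (ψ : α → unitInterval) : Set α := { a | ψ a = 1 }

/-- The undecided degree `μ = (1 − τ) ⊗ (1 − φ)` (componentwise). -/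
def undec {α : Type} (t : Tnorm) (τ φ : α → unitInterval) : α → unitInterval :=
  fun a => t.f (unitInterval.symm (τ a)) (unitInterval.symm (φ a))

lemma tnormProd_mono {β : Type} [DecidableEq β] (t : Tnorm) {g g' : β → unitInterval}
    (h : ∀ b, g b ≤ g' b) (s : Finset β) :
    tnormProd t g s ≤ tnormProd t g' s := by
  induction s using Finset.induction_on with
  | empty => simp [tnormProd]
  | @insert a s ha ih =>
    rw [tnormProd, Finset.fold_insert ha, tnormProd, Finset.fold_insert ha]
    exact t.mono (h a) ih

lemma tconormSum_mono {β : Type} [DecidableEq β] (s : Tconorm) {g g' : β → unitInterval}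
    (h : ∀ b, g b ≤ g' b) (q : Finset β) :
    tconormSum s g q ≤ tconormSum s g' q := by
  induction q using Finset.induction_on with
  | empty => simp [tconormSum]
  | @insert a q ha ih =>
    rw [tconormSum, Finset.fold_insert ha, tconormSum, Finset.fold_insert ha]
    exact s.mono (h a) ih

lemma softC_mono {α : Type} [DecidableEq α] (t : Tnorm) (s : Tconorm)
    (P : Finset (Rule α)) (φ : α → unitInterval) :
    Monotone (softC t s P φ) := by
  intro τ τ' h a
  exact tconormSum_mono s
    (fun (r : Rule α) => t.mono (tnormProd_mono t (fun b => h b) r.pos) le_rfl) _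

/-- The least fixpoint of `𝒞_{P,φ}` above `τ` (propagation until convergence from `τ`). -/
noncomputable def softCInf {α : Type} [DecidableEq α] (t : Tnorm) (s : Tconorm)
    (P : Finset (Rule α)) (φ τ : α → unitInterval) : α → unitInterval :=
  OrderHom.lfp ⟨fun x => τ ⊔ softC t s P φ x,
    fun _ _ h => sup_le_sup_left (softC_mono t s P φ h) τ⟩

/-- The classical immediate consequence operator `C_{P,J}(I)`. -/
def imCons {α : Type} (P : Finset (Rule α)) (J I : Set α) : Set α :=
  { a | ∃ r ∈ P, r.head = a ∧ ↑r.pos ⊆ I ∧ ∀ b ∈ r.neg, b ∉ J }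

lemma imCons_mono {α : Type} (P : Finset (Rule α)) (J : Set α) : Monotone (imCons P J) := by
  rintro I I' h a ⟨r, hr, hh, hp, hn⟩
  exact ⟨r, hr, hh, fun x hx => h (hp hx), hn⟩

/-- `C_{P,J}^∞(I)`: the least fixpoint of `C_{P,J}` above `I`. -/
def imConsInf {α : Type} (P : Finset (Rule α)) (J I : Set α) : Set α :=
  OrderHom.lfp ⟨fun X => I ∪ imCons P J X,
    fun _ _ h => Set.union_subset_union (le_refl I) (imCons_mono P J h)⟩

/-!
Crisp degree vectors are characteristic functions of sets. On the degrees `0` and `1` every t-norm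
is conjunction and every t-conorm is disjunction, so `𝒞_{P,φ}` sends the characteristic function
of `X` to that of `C_{P,𝒜∖[φ]}(X)`. Taking characteristic functions is left adjoint to `[·]`,
hence this intertwining passes to least fixpoints.
-/

lemma l_lfp_eq_lfp_of_semiconj {α β : Type*} [CompleteLattice α] [CompleteLattice β]
    {l : α → β} {u : β → α} (gc : GaloisConnection l u) {f : α →o α} {g : β →o β}
    (h : Function.Semiconj l f g) : l f.lfp = g.lfp := by
  apply le_antisymm
  · apply gc.l_le
    apply f.lfp_le
    apply gc.le_u
    calc
      l (f (u g.lfp)) = g (l (u g.lfp)) := h _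
      _ ≤ g g.lfp := g.monotone (gc.l_u_le _)
      _ = g.lfp := g.map_lfp
  · apply g.lfp_le
    rw [← h, f.map_lfp]

lemma Tnorm.zero_left (t : Tnorm) (x : unitInterval) : t.f 0 x = 0 := by
  refine le_antisymm ?_ unitInterval.nonneg'
  calc
    t.f 0 x ≤ t.f 0 1 := t.mono le_rfl unitInterval.le_one'
    _ = 0 := by rw [t.comm, t.one_left]

lemma Tconorm.one_left (s : Tconorm) (x : unitInterval) : s.f 1 x = 1 := by
  refine le_antisymm unitInterval.le_one' ?_
  calc
    1 = s.f 1 0 := by rw [s.comm, s.zero_left]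
    _ ≤ s.f 1 x := s.mono le_rfl unitInterval.nonneg'

open Classical in
/-- The crisp degree of a proposition, through which t-norms and t-conorms act as connectives.
Decidability is classical because rule bodies are evaluated over arbitrary sets of atoms. -/
noncomputable def truthDegree (p : Prop) : unitInterval := if p then 1 else 0

section truthDegree

variable {p q r : Prop}

lemma truthDegree_of_true (hp : p) : truthDegree p = 1 := if_pos hp

lemma truthDegree_of_false (hp : ¬p) : truthDegree p = 0 := if_neg hp

lemma truthDegree_eq_one_iff : truthDegree p = 1 ↔ p := by
  by_cases hp : p <;> simp [truthDegree, hp]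

lemma symm_truthDegree : unitInterval.symm (truthDegree p) = truthDegree ¬p := by
  by_cases hp : p <;> simp [truthDegree, hp]

lemma Tnorm.truthDegree_and (t : Tnorm) :
    t.f (truthDegree p) (truthDegree q) = truthDegree (p ∧ q) := by
  by_cases hp : p <;> by_cases hq : q <;>
    simp [truthDegree, hp, hq, t.one_left, t.zero_left]

lemma Tconorm.truthDegree_or (s : Tconorm) :
    s.f (truthDegree p) (truthDegree q) = truthDegree (p ∨ q) := by
  by_cases hp : p <;> by_cases hq : q <;>
    simp [truthDegree, hp, hq, s.one_left, s.zero_left]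

lemma eq_truthDegree_of_coe_eq_add_mul {x : unitInterval}
    (hx : (x : ℝ) = truthDegree p + truthDegree q * truthDegree r) :
    x = truthDegree (p ∨ q ∧ r) := by
  by_cases hp : p
  · have one_le : (1 : unitInterval) ≤ x := by
      rw [← Subtype.coe_le_coe, hx, truthDegree_of_true hp]
      exact le_add_of_nonneg_right (mul_nonneg unitInterval.nonneg' unitInterval.nonneg')
    rw [truthDegree_of_true (Or.inl hp)]
    exact le_antisymm unitInterval.le_one' one_le
  · apply Subtype.ext
    by_cases hq : q <;> by_cases hr : r <;> simp [hx, truthDegree, hp, hq, hr]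

end truthDegree

lemma tnormProd_truthDegree {β : Type} (t : Tnorm) (p : β → Prop) (A : Finset β) :
    tnormProd t (fun b => truthDegree (p b)) A = truthDegree (∀ b ∈ A, p b) := by
  induction A using Finset.cons_induction with
  | empty => simp [tnormProd, truthDegree]
  | cons b A hb ih =>
    rw [tnormProd, Finset.fold_cons, ← tnormProd, ih, t.truthDegree_and]
    simp only [Finset.forall_mem_cons]

lemma tconormSum_truthDegree {β : Type} (s : Tconorm) (p : β → Prop) (A : Finset β) :
    tconormSum s (fun b => truthDegree (p b)) A = truthDegree (∃ b ∈ A, p b) := by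
  induction A using Finset.cons_induction with
  | empty => simp [tconormSum, truthDegree]
  | cons b A hb ih =>
    rw [tconormSum, Finset.fold_cons, ← tconormSum, ih, s.truthDegree_or]
    simp only [Finset.mem_cons, exists_eq_or_imp]

/-- The crisp degree vector of a set of atoms, that is, its characteristic function; the binary
vectors of the paper are exactly the vectors of this form. -/
noncomputable def crisp {α : Type} (S : Set α) : α → unitInterval := fun a => truthDegree (a ∈ S)

section crisp

variable {α : Type}

lemma induced_crisp (S : Set α) : induced (crisp S) = S :=
  Set.ext fun _ => truthDegree_eq_one_iff

lemma exists_eq_crisp {ψ : α → unitInterval} (hψ : ∀ a, ψ a = 0 ∨ ψ a = 1) :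
    ∃ S, ψ = crisp S := by
  refine ⟨induced ψ, funext fun a => ?_⟩
  rcases hψ a with ha | ha <;> simp [crisp, truthDegree, induced, ha]

lemma gc_crisp_induced : GaloisConnection (crisp : Set α → α → unitInterval) induced := by
  intro S ψ
  constructor
  · intro h a ha
    exact le_antisymm unitInterval.le_one' ((truthDegree_of_true ha).ge.trans (h a))
  · intro h a
    by_cases ha : a ∈ S
    · exact unitInterval.le_one'.trans (h ha).ge
    · exact (truthDegree_of_false ha).le.trans unitInterval.nonneg'

lemma undec_crisp (t : Tnorm) (T F : Set α) : undec t (crisp T) (crisp F) = crisp (T ∪ F)ᶜ := by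
  funext a
  simp only [undec, crisp, symm_truthDegree, t.truthDegree_and, Set.mem_compl_iff, Set.mem_union,
    not_or]

lemma eq_crisp_of_coe_eq_add_mul {F U D : Set α} {ψ : α → unitInterval}
    (hψ : ∀ a, (ψ a : ℝ) = crisp F a + crisp U a * crisp D a) : ψ = crisp (F ∪ U ∩ D) :=
  funext fun a => eq_truthDegree_of_coe_eq_add_mul (hψ a)

lemma support_crisp (t : Tnorm) (X F : Set α) (r : Rule α) :
    support t (crisp X) (crisp F) r =
      truthDegree ((∀ b ∈ r.pos, b ∈ X) ∧ ∀ b ∈ r.neg, b ∈ F) := by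
  unfold support crisp
  rw [tnormProd_truthDegree, tnormProd_truthDegree, t.truthDegree_and]

lemma softC_crisp [DecidableEq α] (t : Tnorm) (s : Tconorm) (P : Finset (Rule α))
    (F X : Set α) : softC t s P (crisp F) (crisp X) = crisp (imCons P Fᶜ X) := by
  funext a
  simp only [softC, funext (support_crisp t X F), tconormSum_truthDegree, crisp, imCons,
    Finset.mem_filter, and_assoc, Set.mem_ofPred_eq, Set.notMem_compl_iff, Set.subset_def,
    Finset.mem_coe]

end crisp

lemma softCInf_crisp {α : Type} [DecidableEq α] (t : Tnorm) (s : Tconorm) (P : Finset (Rule α))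
    (F T : Set α) : softCInf t s P (crisp F) (crisp T) = crisp (imConsInf P Fᶜ T) := by
  refine (l_lfp_eq_lfp_of_semiconj gc_crisp_induced fun X => ?_).symm
  calc
    crisp (T ∪ imCons P Fᶜ X) = crisp T ⊔ crisp (imCons P Fᶜ X) := gc_crisp_induced.l_sup
    _ = crisp T ⊔ softC t s P (crisp F) (crisp X) := by rw [softC_crisp]

theorem crisp_ndprop_update_is_dprop_iteration_general {α : Type} [DecidableEq α]
    (t : Tnorm) (s : Tconorm) (P : Finset (Rule α)) (τ φ δ φ' : α → unitInterval)
    (hτ : ∀ a, τ a = 0 ∨ τ a = 1) (hφ : ∀ a, φ a = 0 ∨ φ a = 1)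
    (hδ : ∀ a, δ a = 0 ∨ δ a = 1)
    (hφ' : ∀ a, (φ' a : ℝ) = (φ a : ℝ) + (undec t τ φ a : ℝ) * (δ a : ℝ)) :
    induced (undec t τ φ) = Set.univ \ (induced τ ∪ induced φ) ∧
    induced φ' = induced φ ∪ (induced (undec t τ φ) ∩ induced δ) ∧
    induced (softCInf t s P φ' τ) = imConsInf P (Set.univ \ induced φ') (induced τ) := by
  obtain ⟨T, rfl⟩ := exists_eq_crisp hτ
  obtain ⟨F, rfl⟩ := exists_eq_crisp hφ
  obtain ⟨D, rfl⟩ := exists_eq_crisp hδ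
  rw [undec_crisp] at hφ' ⊢
  obtain rfl := eq_crisp_of_coe_eq_add_mul hφ'
  simp only [softCInf_crisp, induced_crisp, ← Set.compl_eq_univ_sdiff, and_self]

/-- For binary `τ, φ, δ` and `φ' = φ + (μ ⊙ δ)` with
`μ = (1−τ) ⊗ (1−φ)`: (i) `[μ] = 𝒜 ∖ ([τ] ∪ [φ])`; (ii) `[φ'] = [φ] ∪ ([μ] ∩ [δ])`;
(iii) the set induced by the least fixpoint of `𝒞_{P,φ'}` above `τ` equals
`C_{P,𝒜∖[φ']}^∞([τ])`. Hence one binary NDProp update coincides with one (batch) DProp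
iteration. -/
theorem crisp_ndprop_update_is_dprop_iteration {α : Type} [Fintype α] [DecidableEq α]
    (t : Tnorm) (s : Tconorm) (P : Finset (Rule α)) (τ φ δ φ' : α → unitInterval)
    (hτ : ∀ a, τ a = 0 ∨ τ a = 1) (hφ : ∀ a, φ a = 0 ∨ φ a = 1)
    (hδ : ∀ a, δ a = 0 ∨ δ a = 1)
    (hφ' : ∀ a, (φ' a : ℝ) = (φ a : ℝ) + (undec t τ φ a : ℝ) * (δ a : ℝ)) :
    induced (undec t τ φ) = Set.univ \ (induced τ ∪ induced φ) ∧
    induced φ' = induced φ ∪ (induced (undec t τ φ) ∩ induced δ) ∧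
    induced (softCInf t s P φ' τ) = imConsInf P (Set.univ \ induced φ') (induced τ) :=
  crisp_ndprop_update_is_dprop_iteration_general t s P τ φ δ φ' hτ hφ hδ hφ'
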